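/- Let 𝓗 be a Hopf algebra over k with antipode S, δ: 𝓗 → k an algebra map, and S̃_δ = δ*S the twisted antipode; assume S̃_δ² = id. Let R be any k-algebra. Then H = R ⊗ 𝓗 ⊗ R^op with α(a) = a⊗1⊗1, β(a) = 1⊗1⊗a, Δ(a⊗h⊗b) = (a⊗h⁽¹⁾⊗1) ⊗_R (1⊗h⁽²⁾⊗b), ε(a⊗h⊗b) = ε(h)ab, and T(a⊗h⊗b) = b ⊗ S̃_δ(h) ⊗ a, is a para-Hopf algebroid over R. -/

import Mathlib

open TensorProduct

noncomputable section

/-- The data of a (pre-)bialgebroid: total algebra `H`, base algebra `R`,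
source map `α` (algebra map), target map `β` (anti-algebra map), a linear lift
`Δ : H → H ⊗[k] H` of the coproduct, and the counit `ε`. -/
structure PreBialgebroid (k H R : Type) [Field k] [Ring H] [Algebra k H]
    [Ring R] [Algebra k R] where
  α : R →ₐ[k] H
  β : R →ₗ[k] H
  β_one : β 1 = 1
  β_mul : ∀ a b : R, β (a * b) = β b * β a
  αβ_comm : ∀ a b : R, α a * β b = β b * α a
  Δ : H →ₗ[k] H ⊗[k] H
  ε : H →ₗ[k] R

namespace PreBialgebroid

variable {k H R : Type} [Field k] [Ring H] [Algebra k H] [Ring R] [Algebra k R]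
variable (D : PreBialgebroid k H R)

/-- The submodule of `H ⊗[k] H` by which one divides to obtain `H ⊗_R H`. -/
def rel2 : Submodule k (H ⊗[k] H) :=
  Submodule.span k {z | ∃ (r : R) (x y : H), z = (D.β r * x) ⊗ₜ[k] y - x ⊗ₜ[k] (D.α r * y)}

/-- The projection `H ⊗[k] H → H ⊗_R H`. -/
def π2 : H ⊗[k] H →ₗ[k] (H ⊗[k] H) ⧸ D.rel2 := D.rel2.mkQ

/-- Relations for the triple tensor product `H ⊗_R H ⊗_R H` (right associated). -/
def rel3 : Submodule k (H ⊗[k] (H ⊗[k] H)) :=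
  Submodule.span k {z |
    (∃ (r : R) (x y w : H), z = (D.β r * x) ⊗ₜ[k] (y ⊗ₜ[k] w) - x ⊗ₜ[k] ((D.α r * y) ⊗ₜ[k] w)) ∨
    (∃ (r : R) (x y w : H), z = x ⊗ₜ[k] ((D.β r * y) ⊗ₜ[k] w) - x ⊗ₜ[k] (y ⊗ₜ[k] (D.α r * w)))}

def π3 : H ⊗[k] (H ⊗[k] H) →ₗ[k] (H ⊗[k] (H ⊗[k] H)) ⧸ D.rel3 := D.rel3.mkQ

/-- For a linear map `f : H → H`, the map `x ⊗ y ↦ f x * y`. -/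
def mulL (f : H →ₗ[k] H) : H ⊗[k] H →ₗ[k] H :=
  TensorProduct.lift
    (LinearMap.mk₂ k (fun x y => f x * y)
      (by intro x x' y; simp [map_add, add_mul])
      (by intro c x y; simp [map_smul, smul_mul_assoc])
      (by intro x y y'; simp [mul_add])
      (by intro c x y; simp [mul_smul_comm]))

/-- For a linear map `f : H → H`, the map `x ⊗ y ↦ f y * x`. -/
def mulR (f : H →ₗ[k] H) : H ⊗[k] H →ₗ[k] H :=
  TensorProduct.lift
    (LinearMap.mk₂ k (fun x y => f y * x)
      (by intro x x' y; simp [mul_add])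
      (by intro c x y; simp [mul_smul_comm])
      (by intro x y y'; simp [map_add, add_mul])
      (by intro c x y; simp [map_smul, smul_mul_assoc]))

/-- The (lift of the) Connes–Moscovici cyclic operator in degree 2:
`x ⊗ y ↦ Δ(T x) · (y ⊗ 1)`. -/
def tau2 (T : H →ₗ[k] H) : H ⊗[k] H →ₗ[k] H ⊗[k] H :=
  TensorProduct.lift
    (LinearMap.mk₂ k (fun x y => D.Δ (T x) * (y ⊗ₜ[k] (1 : H)))
      (by intro x x' y; simp [map_add, add_mul])
      (by intro c x y; simp [map_smul, smul_mul_assoc])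
      (by intro x y y'; simp [add_tmul, mul_add])
      (by intro c x y; simp [← TensorProduct.smul_tmul', mul_smul_comm]))

/-- The bialgebroid axioms, stated for the chosen linear lift `Δ` of the coproduct
modulo the relations defining `H ⊗_R H`. -/
structure IsBialgebroid : Prop where
  Δ_one : D.π2 (D.Δ 1) = D.π2 ((1 : H) ⊗ₜ[k] (1 : H))
  coassoc : ∀ h : H,
    D.π3 ((TensorProduct.assoc k H H H) ((D.Δ.rTensor H) (D.Δ h))) =
      D.π3 ((D.Δ.lTensor H) (D.Δ h))
  Δ_cp3 : ∀ (h : H) (r : R),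
    D.π2 (D.Δ h * (D.β r ⊗ₜ[k] (1 : H) - (1 : H) ⊗ₜ[k] D.α r)) = 0
  Δ_mul : ∀ a b : H, D.π2 (D.Δ (a * b)) = D.π2 (D.Δ a * D.Δ b)
  Δ_left : ∀ (r : R) (h : H),
    D.π2 (D.Δ (D.α r * h)) = D.π2 ((D.α r ⊗ₜ[k] (1 : H)) * D.Δ h)
  Δ_right : ∀ (r : R) (h : H),
    D.π2 (D.Δ (D.β r * h)) = D.π2 (((1 : H) ⊗ₜ[k] D.β r) * D.Δ h)
  ε_one : D.ε 1 = 1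
  ε_left : ∀ (r : R) (h : H), D.ε (D.α r * h) = r * D.ε h
  ε_right : ∀ (r : R) (h : H), D.ε (D.β r * h) = D.ε h * r
  counit_l : ∀ h : H, mulL (D.α.toLinearMap ∘ₗ D.ε) (D.Δ h) = h
  counit_r : ∀ h : H, mulR (D.β ∘ₗ D.ε) (D.Δ h) = h

/-- The para-Hopf algebroid axioms for a para-antipode `T`. -/
structure IsParaHopf (T : H →ₗ[k] H) : Prop where
  bialgebroid : D.IsBialgebroid
  T_one : T 1 = 1
  T_antimul : ∀ a b : H, T (a * b) = T b * T a
  PH1 : ∀ r : R, T (D.β r) = D.α r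
  PH2 : ∀ h : H, mulL T (D.Δ h) = D.β (D.ε (T h))
  T_invol : ∀ h : H, T (T h) = h
  PH3 : ∀ h : H, D.π2 (tau2 D T (D.Δ h)) = D.π2 ((1 : H) ⊗ₜ[k] T h)

end PreBialgebroid

open Coalgebra in
/-- The convolution `δ * S` for a character `δ`. -/
def twistedAntipode {k 𝓗 : Type} [Field k] [Ring 𝓗] [HopfAlgebra k 𝓗]
    (δ : 𝓗 →ₐ[k] k) : 𝓗 →ₗ[k] 𝓗 :=
  (TensorProduct.lift
    (LinearMap.mk₂ k (fun x y => δ x • HopfAlgebra.antipode (R := k) y)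
      (by intro x x' y; simp [map_add, add_smul])
      (by intro c x y; simp [mul_smul])
      (by intro x y y'; simp [map_add, smul_add])
      (by intro c x y; simp only [map_smul]; rw [smul_comm]))) ∘ₗ comul

/-!
In the convolution algebra `Hom(𝓗, 𝓗 ⊗ 𝓗)` the coproduct is the product `ι₁ * ι₂` of the two
inclusions, with inverse `Δ ∘ S`. Hence `(Δ ∘ S) * ι₁` is a left inverse of `ι₂`, so it equals
`ι₂ ∘ S`; that is, `Δ(S h₁) (h₂ ⊗ 1) = 1 ⊗ S h`. The character `δ` takes scalar values, so
multiplying by it on the left gives the same identity for the twisted antipode. The axioms for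
`R ⊗ 𝓗 ⊗ Rᵒᵖ` follow from the identities in `𝓗` along the maps `x ↦ a ⊗ x ⊗ b`, and for the cyclic
axiom the relation defining `⊗_R` moves the remaining factor in `Rᵒᵖ` across the tensor sign.
-/

section Convolution

open Coalgebra HopfAlgebra WithConv

variable {k A B : Type*} [CommSemiring k] [Semiring A] [Semiring B] [Algebra k B]

theorem algHom_comp_antipode_convMul [HopfAlgebra k A] (φ : A →ₐ[k] B) :
    toConv (φ.toLinearMap ∘ₗ antipode k) * toConv φ.toLinearMap = 1 := by
  have h := LinearMap.algHom_comp_convMul_distrib φ (toConv (antipode k (A := A)))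
    (toConv LinearMap.id)
  rw [LinearMap.antipode_mul_id] at h
  refine (congrArg toConv h).symm.trans ?_
  ext x
  simp [LinearMap.convOne_def]

theorem algHom_convMul_comp_antipode [HopfAlgebra k A] (φ : A →ₐ[k] B) :
    toConv φ.toLinearMap * toConv (φ.toLinearMap ∘ₗ antipode k) = 1 := by
  have h := LinearMap.algHom_comp_convMul_distrib φ (toConv LinearMap.id)
    (toConv (antipode k (A := A)))
  rw [LinearMap.id_mul_antipode] at h
  refine (congrArg toConv h).symm.trans ?_
  ext x
  simp [LinearMap.convOne_def]

theorem includeLeft_convMul_includeRight [Bialgebra k A] :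
    toConv (Algebra.TensorProduct.includeLeft : A →ₐ[k] A ⊗[k] A).toLinearMap *
        toConv (Algebra.TensorProduct.includeRight : A →ₐ[k] A ⊗[k] A).toLinearMap =
      toConv (comul (R := k) (A := A)) := by
  have h : LinearMap.mul' k (A ⊗[k] A) ∘ₗ
      TensorProduct.map (Algebra.TensorProduct.includeLeft : A →ₐ[k] A ⊗[k] A).toLinearMap
        (Algebra.TensorProduct.includeRight : A →ₐ[k] A ⊗[k] A).toLinearMap = LinearMap.id :=
    TensorProduct.ext' fun x y => by simp
  ext x
  exact LinearMap.congr_fun h (comul x)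

theorem comul_comp_antipode_convMul_includeLeft [HopfAlgebra k A] :
    toConv (comul (R := k) ∘ₗ antipode k) *
        toConv (Algebra.TensorProduct.includeLeft : A →ₐ[k] A ⊗[k] A).toLinearMap =
      toConv ((Algebra.TensorProduct.includeRight : A →ₐ[k] A ⊗[k] A).toLinearMap ∘ₗ
        antipode k) := by
  refine left_inv_eq_right_inv ?_ (algHom_convMul_comp_antipode _)
  rw [mul_assoc, includeLeft_convMul_includeRight]
  exact algHom_comp_antipode_convMul (Bialgebra.comulAlgHom k A)

end Convolution

section TwistedAntipode

open Coalgebra HopfAlgebra WithConv PreBialgebroid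

variable {k 𝓗 : Type} [Field k] [Ring 𝓗] [HopfAlgebra k 𝓗] (δ : 𝓗 →ₐ[k] k)

theorem toConv_twistedAntipode :
    toConv (twistedAntipode δ) =
      toConv ((Algebra.ofId k 𝓗).comp δ).toLinearMap * toConv (antipode k (A := 𝓗)) := by
  ext h
  simp only [twistedAntipode, LinearMap.convMul_apply, LinearMap.comp_apply]
  rw [← LinearMap.comp_apply (LinearMap.mul' k 𝓗)]
  refine LinearMap.congr_fun (TensorProduct.ext' fun x y => ?_) (comul (R := k) h)
  simp [Algebra.ofId_apply, Algebra.smul_def]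

theorem algHom_comp_twistedAntipode {B : Type*} [Semiring B] [Algebra k B] (φ : 𝓗 →ₐ[k] B) :
    toConv (φ.toLinearMap ∘ₗ twistedAntipode δ) =
      toConv ((Algebra.ofId k B).comp δ).toLinearMap *
        toConv (φ.toLinearMap ∘ₗ antipode k) := by
  have hscalar : φ.toLinearMap ∘ₗ ((Algebra.ofId k 𝓗).comp δ).toLinearMap =
      ((Algebra.ofId k B).comp δ).toLinearMap := by
    ext x
    simp [Algebra.ofId_apply]
  rw [WithConv.toConv_injective.eq_iff.mp (toConv_twistedAntipode δ), ← hscalar]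
  exact congrArg toConv (LinearMap.algHom_comp_convMul_distrib φ _ _)

theorem twistedAntipode_one : twistedAntipode δ 1 = 1 := by
  simp [twistedAntipode, Algebra.TensorProduct.one_def]

theorem twistedAntipode_mul (g h : 𝓗) :
    twistedAntipode δ (g * h) = twistedAntipode δ h * twistedAntipode δ g := by
  simp only [twistedAntipode, LinearMap.comp_apply, Bialgebra.comul_mul]
  induction comul (R := k) g with
  | zero => simp
  | add s t hs ht => simp only [add_mul, mul_add, map_add, hs, ht]
  | tmul x y =>
    induction comul (R := k) h with
    | zero => simp
    | add s t hs ht => simp only [add_mul, mul_add, map_add, hs, ht]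
    | tmul z w => simp [antipode_mul_antidistrib, smul_smul]

theorem counit_twistedAntipode (h : 𝓗) : counit (R := k) (twistedAntipode δ h) = δ h := by
  have hconv := algHom_comp_twistedAntipode δ (Bialgebra.counitAlgHom k 𝓗)
  have hcounit : toConv ((Bialgebra.counitAlgHom k 𝓗).toLinearMap ∘ₗ antipode k) = 1 :=
    WithConv.ext counit_comp_antipode
  rw [hcounit, mul_one] at hconv
  exact congr($(hconv).ofConv h)

theorem mulL_twistedAntipode_comul (h : 𝓗) :
    mulL (twistedAntipode δ) (comul (R := k) h) = algebraMap k 𝓗 (δ h) := by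
  have hconv : toConv (twistedAntipode δ) * toConv LinearMap.id =
      toConv ((Algebra.ofId k 𝓗).comp δ).toLinearMap := by
    rw [toConv_twistedAntipode, mul_assoc, LinearMap.antipode_mul_id, mul_one]
  have hmul : mulL (twistedAntipode δ) =
      LinearMap.mul' k 𝓗 ∘ₗ TensorProduct.map (twistedAntipode δ) LinearMap.id :=
    TensorProduct.ext' fun x y => by simp [mulL]
  rw [hmul]
  exact congr($(hconv).ofConv h)

theorem comul_comp_twistedAntipode_convMul_includeLeft :
    toConv (comul (R := k) ∘ₗ twistedAntipode δ) *
        toConv (Algebra.TensorProduct.includeLeft : 𝓗 →ₐ[k] 𝓗 ⊗[k] 𝓗).toLinearMap =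
      toConv ((Algebra.TensorProduct.includeRight : 𝓗 →ₐ[k] 𝓗 ⊗[k] 𝓗).toLinearMap ∘ₗ
        twistedAntipode δ) := by
  have hcomul := algHom_comp_twistedAntipode δ (Bialgebra.comulAlgHom k 𝓗)
  have hright := algHom_comp_twistedAntipode δ
    (Algebra.TensorProduct.includeRight : 𝓗 →ₐ[k] 𝓗 ⊗[k] 𝓗)
  rw [hright, ← comul_comp_antipode_convMul_includeLeft, ← mul_assoc]
  exact congrArg (· * _) hcomul

end TwistedAntipode

namespace PreBialgebroid

variable {k H R : Type} [Field k] [Ring H] [Algebra k H] [Ring R] [Algebra k R]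
variable (D : PreBialgebroid k H R)

theorem π2_target_mul_tmul (r : R) (x y : H) :
    D.π2 ((D.β r * x) ⊗ₜ y) = D.π2 (x ⊗ₜ (D.α r * y)) := by
  rw [← sub_eq_zero, ← map_sub]
  exact (Submodule.Quotient.mk_eq_zero _).2 (Submodule.subset_span ⟨r, x, y, rfl⟩)

end PreBialgebroid

/-- The algebra `R ⊗ 𝓗 ⊗ Rᵒᵖ`, that is, the enveloping algebra of `R` with `𝓗` inserted. -/
abbrev EnvelopingTensor (k R 𝓗 : Type*) [CommSemiring k] [Semiring R] [Algebra k R] [Semiring 𝓗]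
    [Algebra k 𝓗] : Type _ :=
  R ⊗[k] (𝓗 ⊗[k] Rᵐᵒᵖ)

namespace EnvelopingTensor

-- Needed for the semiring instance on `EnvelopingTensor k R 𝓗 ⊗[k] EnvelopingTensor k R 𝓗`.
set_option maxSynthPendingDepth 3

open MulOpposite Coalgebra

section Maps

variable {k R 𝓗 : Type*} [CommSemiring k] [Semiring R] [Algebra k R] [Semiring 𝓗]

section Algebra

variable [Algebra k 𝓗]

theorem linearMap_eq_of_tmul {M : Type*} [AddCommMonoid M] [Module k M]
    {f g : EnvelopingTensor k R 𝓗 →ₗ[k] M}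
    (hfg : ∀ (a : R) (h : 𝓗) (b : Rᵐᵒᵖ), f (a ⊗ₜ (h ⊗ₜ b)) = g (a ⊗ₜ (h ⊗ₜ b)))
    (z : EnvelopingTensor k R 𝓗) : f z = g z := by
  suffices f = g by rw [this]
  ext a h b
  exact hfg a h b

variable (k 𝓗) in
/-- The linear map `x ↦ a ⊗ x ⊗ b`. -/
def sandwich (a : R) (b : Rᵐᵒᵖ) : 𝓗 →ₗ[k] EnvelopingTensor k R 𝓗 :=
  TensorProduct.mk k R (𝓗 ⊗[k] Rᵐᵒᵖ) a ∘ₗ (TensorProduct.mk k 𝓗 Rᵐᵒᵖ).flip b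

@[simp]
theorem sandwich_apply (a : R) (b : Rᵐᵒᵖ) (x : 𝓗) : sandwich k 𝓗 a b x = a ⊗ₜ (x ⊗ₜ b) :=
  rfl

variable (k R 𝓗) in
/-- The target map `a ↦ 1 ⊗ 1 ⊗ a`. -/
def target : R →ₗ[k] EnvelopingTensor k R 𝓗 :=
  (TensorProduct.mk k R (𝓗 ⊗[k] Rᵐᵒᵖ) 1 ∘ₗ TensorProduct.mk k 𝓗 Rᵐᵒᵖ 1) ∘ₗ
    (opLinearEquiv k).toLinearMap

@[simp]
theorem target_apply (a : R) : target k R 𝓗 a = 1 ⊗ₜ (1 ⊗ₜ op a) :=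
  rfl

variable (R) in
/-- The linear map `a ⊗ h ⊗ b ↦ b ⊗ S h ⊗ a`, the para-antipode when `S` is a twisted antipode. -/
def flip (S : 𝓗 →ₗ[k] 𝓗) : EnvelopingTensor k R 𝓗 →ₗ[k] EnvelopingTensor k R 𝓗 :=
  (TensorProduct.leftComm k 𝓗 R Rᵐᵒᵖ).toLinearMap ∘ₗ
    (TensorProduct.comm k Rᵐᵒᵖ R).toLinearMap.lTensor 𝓗 ∘ₗ
    (TensorProduct.leftComm k Rᵐᵒᵖ 𝓗 R).toLinearMap ∘ₗ
    TensorProduct.map (opLinearEquiv k).toLinearMap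
      (TensorProduct.map S (opLinearEquiv k).symm.toLinearMap)

@[simp]
theorem flip_tmul (S : 𝓗 →ₗ[k] 𝓗) (a : R) (b : Rᵐᵒᵖ) (h : 𝓗) :
    flip R S (a ⊗ₜ (h ⊗ₜ b)) = unop b ⊗ₜ (S h ⊗ₜ op a) := by
  simp [flip]

theorem flip_mul {S : 𝓗 →ₗ[k] 𝓗} (hS : ∀ g h, S (g * h) = S h * S g)
    (x y : EnvelopingTensor k R 𝓗) : flip R S (x * y) = flip R S y * flip R S x := by
  refine linearMap_eq_of_tmul (f := flip R S ∘ₗ LinearMap.mulRight k y)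
    (g := LinearMap.mulLeft k (flip R S y) ∘ₗ flip R S) (fun a g b => ?_) x
  refine linearMap_eq_of_tmul (f := flip R S ∘ₗ LinearMap.mulLeft k (a ⊗ₜ[k] (g ⊗ₜ[k] b)))
    (g := LinearMap.mulRight k (flip R S (a ⊗ₜ[k] (g ⊗ₜ[k] b))) ∘ₗ flip R S) (fun c h d => ?_) y
  simp [hS, ← op_mul]

theorem flip_flip {S : 𝓗 →ₗ[k] 𝓗} (hS : ∀ h, S (S h) = h) (x : EnvelopingTensor k R 𝓗) :
    flip R S (flip R S x) = x :=
  linearMap_eq_of_tmul (f := flip R S ∘ₗ flip R S) (g := LinearMap.id)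
    (fun a h b => by simp [hS]) x

end Algebra

variable [Bialgebra k 𝓗]

variable (k R 𝓗) in
/-- The algebra map `a ⊗ h ⊗ b ↦ (a ⊗ h₁ ⊗ 1) ⊗ (1 ⊗ h₂ ⊗ b)`, lifting the coproduct of the
bialgebroid to the tensor product over `k`. -/
def comulLift : EnvelopingTensor k R 𝓗 →ₐ[k] EnvelopingTensor k R 𝓗 ⊗[k] EnvelopingTensor k R 𝓗 :=
  (Algebra.TensorProduct.map
      (Algebra.TensorProduct.map (.id k R) Algebra.TensorProduct.includeLeft)
      Algebra.TensorProduct.includeRight).comp <|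
    (Algebra.TensorProduct.assoc k k k R 𝓗 (𝓗 ⊗[k] Rᵐᵒᵖ)).symm.toAlgHom.comp <|
    Algebra.TensorProduct.map (.id k R) <|
    (Algebra.TensorProduct.assoc k k k 𝓗 𝓗 Rᵐᵒᵖ).toAlgHom.comp <|
    Algebra.TensorProduct.map (Bialgebra.comulAlgHom k 𝓗) (.id k Rᵐᵒᵖ)

theorem comulLift_tmul (a : R) (b : Rᵐᵒᵖ) (h : 𝓗) :
    comulLift k R 𝓗 (a ⊗ₜ (h ⊗ₜ b)) =
      TensorProduct.map (sandwich k 𝓗 a 1) (sandwich k 𝓗 1 b) (comul h) := by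
  simp only [comulLift, AlgHom.comp_apply, Algebra.TensorProduct.map_tmul,
    Bialgebra.comulAlgHom_apply]
  induction comul (R := k) h with
  | zero => simp
  | add s t hs ht => simp only [add_tmul, tmul_add, map_add, hs, ht]
  | tmul x y => simp

theorem comulLift_comp_sandwich (a : R) (b : Rᵐᵒᵖ) :
    (comulLift k R 𝓗).toLinearMap ∘ₗ sandwich k 𝓗 a b =
      TensorProduct.map (sandwich k 𝓗 a 1) (sandwich k 𝓗 1 b) ∘ₗ comul :=
  LinearMap.ext fun h => comulLift_tmul a b h

variable (k R 𝓗) in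
/-- The counit `a ⊗ h ⊗ b ↦ ε(h) a b`. -/
def counitMap : EnvelopingTensor k R 𝓗 →ₗ[k] R :=
  LinearMap.mul' k R ∘ₗ TensorProduct.map LinearMap.id
    ((TensorProduct.lid k R).toLinearMap ∘ₗ
      TensorProduct.map counit (opLinearEquiv k).symm.toLinearMap)

@[simp]
theorem counitMap_tmul (a : R) (b : Rᵐᵒᵖ) (h : 𝓗) :
    counitMap k R 𝓗 (a ⊗ₜ (h ⊗ₜ b)) = counit (R := k) h • (a * unop b) := by
  simp [counitMap]

theorem comulLift_coassoc (z : EnvelopingTensor k R 𝓗) :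
    TensorProduct.assoc k _ _ _
        ((comulLift k R 𝓗).toLinearMap.rTensor _ (comulLift k R 𝓗 z)) =
      (comulLift k R 𝓗).toLinearMap.lTensor _ (comulLift k R 𝓗 z) := by
  refine linearMap_eq_of_tmul
    (f := (TensorProduct.assoc k _ _ _).toLinearMap ∘ₗ
      (comulLift k R 𝓗).toLinearMap.rTensor _ ∘ₗ (comulLift k R 𝓗).toLinearMap)
    (g := (comulLift k R 𝓗).toLinearMap.lTensor _ ∘ₗ (comulLift k R 𝓗).toLinearMap)
    (fun a h b => ?_) z
  simp only [LinearMap.comp_apply, AlgHom.toLinearMap_apply, comulLift_tmul,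
    ← LinearMap.comp_apply (LinearMap.rTensor _ _), ← LinearMap.comp_apply (LinearMap.lTensor _ _),
    LinearMap.rTensor_comp_map, LinearMap.lTensor_comp_map, comulLift_comp_sandwich]
  rw [← LinearMap.map_comp_rTensor, ← LinearMap.map_comp_lTensor, LinearMap.comp_apply,
    LinearMap.comp_apply, LinearEquiv.coe_coe, ← TensorProduct.map_map_assoc,
    Coalgebra.coassoc_apply]

end Maps

section ParaHopf

open PreBialgebroid

variable {k R 𝓗 : Type} [Field k] [Ring R] [Algebra k R] [Ring 𝓗]

theorem mulL_flip_map_sandwich [Algebra k 𝓗] (S : 𝓗 →ₗ[k] 𝓗) (a : R) (b : Rᵐᵒᵖ) (t : 𝓗 ⊗[k] 𝓗) :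
    mulL (flip R S) (TensorProduct.map (sandwich k 𝓗 a 1) (sandwich k 𝓗 1 b) t) =
      sandwich k 𝓗 1 (op a * b) (mulL S t) := by
  induction t with
  | zero => simp
  | add s t hs ht => simp only [map_add, hs, ht]
  | tmul x y => simp [mulL]

section Bialgebra

variable [Bialgebra k 𝓗]

variable (k R 𝓗) in
/-- The bialgebroid structure over `R` on `R ⊗ 𝓗 ⊗ Rᵒᵖ`, for a bialgebra `𝓗`. The coproduct is
represented by its multiplicative lift `comulLift`. -/
def preBialgebroid : PreBialgebroid k (EnvelopingTensor k R 𝓗) R where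
  α := Algebra.TensorProduct.includeLeft
  β := target k R 𝓗
  β_one := rfl
  β_mul a b := by simp
  αβ_comm a b := by simp
  Δ := (comulLift k R 𝓗).toLinearMap
  ε := counitMap k R 𝓗

@[simp]
theorem preBialgebroid_α (a : R) : (preBialgebroid k R 𝓗).α a = a ⊗ₜ 1 :=
  rfl

@[simp]
theorem preBialgebroid_β (a : R) : (preBialgebroid k R 𝓗).β a = 1 ⊗ₜ (1 ⊗ₜ op a) :=
  rfl

theorem preBialgebroid_Δ_tmul (a : R) (b : Rᵐᵒᵖ) (h : 𝓗) :
    (preBialgebroid k R 𝓗).Δ (a ⊗ₜ (h ⊗ₜ b)) =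
      TensorProduct.map (sandwich k 𝓗 a 1) (sandwich k 𝓗 1 b) (comul h) :=
  comulLift_tmul a b h

theorem preBialgebroid_ε_tmul (a : R) (b : Rᵐᵒᵖ) (h : 𝓗) :
    (preBialgebroid k R 𝓗).ε (a ⊗ₜ (h ⊗ₜ b)) = counit (R := k) h • (a * unop b) :=
  counitMap_tmul a b h

theorem π2_map_sandwich_mul_sub (a r : R) (b : Rᵐᵒᵖ) (t : 𝓗 ⊗[k] 𝓗) :
    (preBialgebroid k R 𝓗).π2
      (TensorProduct.map (sandwich k 𝓗 a 1) (sandwich k 𝓗 1 b) t *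
        ((preBialgebroid k R 𝓗).β r ⊗ₜ 1 - 1 ⊗ₜ (preBialgebroid k R 𝓗).α r)) = 0 := by
  induction t with
  | zero => simp
  | add s t hs ht => simp only [map_add, add_mul, hs, ht, add_zero]
  | tmul x y =>
    have hbal := (preBialgebroid k R 𝓗).π2_target_mul_tmul r (sandwich k 𝓗 a 1 x)
      (sandwich k 𝓗 1 b y)
    rw [mul_sub, map_sub, sub_eq_zero]
    simpa [Algebra.TensorProduct.one_def] using hbal

theorem mulL_source_counit_map_sandwich (a : R) (b : Rᵐᵒᵖ) (t : 𝓗 ⊗[k] 𝓗) :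
    mulL ((preBialgebroid k R 𝓗).α.toLinearMap ∘ₗ (preBialgebroid k R 𝓗).ε)
        (TensorProduct.map (sandwich k 𝓗 a 1) (sandwich k 𝓗 1 b) t) =
      sandwich k 𝓗 a b (TensorProduct.lid k 𝓗 (counit.rTensor 𝓗 t)) := by
  induction t with
  | zero => simp
  | add s t hs ht => simp only [map_add, hs, ht]
  | tmul x y => simp [mulL, preBialgebroid_ε_tmul, smul_tmul']

theorem mulR_target_counit_map_sandwich (a : R) (b : Rᵐᵒᵖ) (t : 𝓗 ⊗[k] 𝓗) :
    mulR ((preBialgebroid k R 𝓗).β ∘ₗ (preBialgebroid k R 𝓗).ε)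
        (TensorProduct.map (sandwich k 𝓗 a 1) (sandwich k 𝓗 1 b) t) =
      sandwich k 𝓗 a b (TensorProduct.rid k 𝓗 (counit.lTensor 𝓗 t)) := by
  induction t with
  | zero => simp
  | add s t hs ht => simp only [map_add, hs, ht]
  | tmul x y => simp [mulR, preBialgebroid_ε_tmul]

theorem isBialgebroid_preBialgebroid : (preBialgebroid k R 𝓗).IsBialgebroid where
  Δ_one := congrArg _ (map_one (comulLift k R 𝓗))
  coassoc z := congrArg _ (comulLift_coassoc z)
  Δ_cp3 z r := by
    refine linearMap_eq_of_tmul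
      (f := (preBialgebroid k R 𝓗).π2 ∘ₗ LinearMap.mulRight k _ ∘ₗ (preBialgebroid k R 𝓗).Δ)
      (g := 0) (fun a h b => ?_) z
    simp only [LinearMap.comp_apply, preBialgebroid_Δ_tmul]
    exact π2_map_sandwich_mul_sub a r b (comul h)
  Δ_mul y z := congrArg _ (map_mul (comulLift k R 𝓗) y z)
  Δ_left r z := by
    refine congrArg _ ((map_mul (comulLift k R 𝓗) _ z).trans (congrArg (· * _) ?_))
    simpa [Algebra.TensorProduct.one_def] using comulLift_tmul (k := k) (𝓗 := 𝓗) r 1 1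
  Δ_right r z := by
    refine congrArg _ ((map_mul (comulLift k R 𝓗) _ z).trans (congrArg (· * _) ?_))
    simpa [Algebra.TensorProduct.one_def] using comulLift_tmul (k := k) (𝓗 := 𝓗) 1 (op r) 1
  ε_one := by simp [Algebra.TensorProduct.one_def, preBialgebroid_ε_tmul]
  ε_left r z :=
    linearMap_eq_of_tmul
      (f := (preBialgebroid k R 𝓗).ε ∘ₗ LinearMap.mulLeft k ((preBialgebroid k R 𝓗).α r))
      (g := LinearMap.mulLeft k r ∘ₗ (preBialgebroid k R 𝓗).ε)
      (fun a h b => by simp [preBialgebroid_ε_tmul, mul_assoc]) z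
  ε_right r z :=
    linearMap_eq_of_tmul
      (f := (preBialgebroid k R 𝓗).ε ∘ₗ LinearMap.mulLeft k ((preBialgebroid k R 𝓗).β r))
      (g := LinearMap.mulRight k r ∘ₗ (preBialgebroid k R 𝓗).ε)
      (fun a h b => by simp [preBialgebroid_ε_tmul, mul_assoc]) z
  counit_l z := by
    refine linearMap_eq_of_tmul (f := mulL _ ∘ₗ (preBialgebroid k R 𝓗).Δ) (g := LinearMap.id)
      (fun a h b => ?_) z
    simp [preBialgebroid_Δ_tmul, mulL_source_counit_map_sandwich]
  counit_r z := by
    refine linearMap_eq_of_tmul (f := mulR _ ∘ₗ (preBialgebroid k R 𝓗).Δ) (g := LinearMap.id)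
      (fun a h b => ?_) z
    simp [preBialgebroid_Δ_tmul, mulR_target_counit_map_sandwich]

theorem π2_map_sandwich_mul_sandwich_tmul_one (a b : Rᵐᵒᵖ) (y : 𝓗) (t : 𝓗 ⊗[k] 𝓗) :
    (preBialgebroid k R 𝓗).π2 (TensorProduct.map (sandwich k 𝓗 1 1) (sandwich k 𝓗 1 a) t *
        (sandwich k 𝓗 1 b y ⊗ₜ 1)) =
      (preBialgebroid k R 𝓗).π2 (TensorProduct.map (sandwich k 𝓗 1 1) (sandwich k 𝓗 (unop b) a)
        (t * (y ⊗ₜ 1))) := by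
  induction t with
  | zero => simp
  | add s t hs ht => simp only [map_add, add_mul, hs, ht]
  | tmul z w =>
    have hbal := (preBialgebroid k R 𝓗).π2_target_mul_tmul (unop b) (sandwich k 𝓗 1 1 (z * y))
      (sandwich k 𝓗 1 a w)
    simpa using hbal

theorem π2_tau2_flip_map_sandwich (S : 𝓗 →ₗ[k] 𝓗) (a : R) (b : Rᵐᵒᵖ) (t : 𝓗 ⊗[k] 𝓗) :
    (preBialgebroid k R 𝓗).π2 (tau2 (preBialgebroid k R 𝓗) (flip R S)
        (TensorProduct.map (sandwich k 𝓗 a 1) (sandwich k 𝓗 1 b) t)) =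
      (preBialgebroid k R 𝓗).π2 (TensorProduct.map (sandwich k 𝓗 1 1) (sandwich k 𝓗 (unop b) (op a))
        (LinearMap.mul' k (𝓗 ⊗[k] 𝓗) (TensorProduct.map (comul ∘ₗ S)
          (Algebra.TensorProduct.includeLeft : 𝓗 →ₐ[k] 𝓗 ⊗[k] 𝓗).toLinearMap t))) := by
  induction t with
  | zero => simp
  | add s t hs ht => simp only [map_add, hs, ht]
  | tmul x y =>
    simpa [tau2, preBialgebroid_Δ_tmul] using
      π2_map_sandwich_mul_sandwich_tmul_one (op a) b y (comul (R := k) (S x))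

end Bialgebra

variable [HopfAlgebra k 𝓗] (δ : 𝓗 →ₐ[k] k)

theorem isParaHopf_flip_twistedAntipode
    (hS2 : ∀ h : 𝓗, twistedAntipode δ (twistedAntipode δ h) = h) :
    (preBialgebroid k R 𝓗).IsParaHopf (flip R (twistedAntipode δ)) where
  bialgebroid := isBialgebroid_preBialgebroid
  T_one := by simp [Algebra.TensorProduct.one_def, twistedAntipode_one]
  T_antimul := flip_mul (twistedAntipode_mul δ)
  PH1 r := by simp [twistedAntipode_one, Algebra.TensorProduct.one_def]
  PH2 z := by
    refine linearMap_eq_of_tmul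
      (f := mulL (flip R (twistedAntipode δ)) ∘ₗ (preBialgebroid k R 𝓗).Δ)
      (g := (preBialgebroid k R 𝓗).β ∘ₗ (preBialgebroid k R 𝓗).ε ∘ₗ flip R (twistedAntipode δ))
      (fun a h b => ?_) z
    simp [preBialgebroid_Δ_tmul, preBialgebroid_ε_tmul, mulL_flip_map_sandwich,
      mulL_twistedAntipode_comul, counit_twistedAntipode, Algebra.algebraMap_eq_smul_one,
      smul_tmul']
  T_invol := flip_flip hS2
  PH3 z := by
    refine linearMap_eq_of_tmul
      (f := (preBialgebroid k R 𝓗).π2 ∘ₗ tau2 (preBialgebroid k R 𝓗) (flip R (twistedAntipode δ)) ∘ₗ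
        (preBialgebroid k R 𝓗).Δ)
      (g := (preBialgebroid k R 𝓗).π2 ∘ₗ TensorProduct.mk k _ _ 1 ∘ₗ flip R (twistedAntipode δ))
      (fun a h b => ?_) z
    have hcomul : LinearMap.mul' k (𝓗 ⊗[k] 𝓗) (TensorProduct.map (comul ∘ₗ twistedAntipode δ)
        (Algebra.TensorProduct.includeLeft : 𝓗 →ₐ[k] 𝓗 ⊗[k] 𝓗).toLinearMap (comul h)) =
          1 ⊗ₜ twistedAntipode δ h :=
      congr($(comul_comp_twistedAntipode_convMul_includeLeft δ).ofConv h)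
    simp only [LinearMap.comp_apply, preBialgebroid_Δ_tmul, π2_tau2_flip_map_sandwich, hcomul]
    simp [Algebra.TensorProduct.one_def]

end ParaHopf

end EnvelopingTensor

open Coalgebra MulOpposite in
/-- for a Hopf algebra `𝓗` with character `δ` whose twisted antipode is
involutive, and any algebra `R`, the algebra `H = R ⊗ 𝓗 ⊗ Rᵒᵖ` is a para-Hopf algebroid
over `R` with the structure maps of Example 2.3. -/
theorem tensor_hopf_is_paraHopf
    {k R 𝓗 : Type} [Field k] [Ring R] [Algebra k R] [Ring 𝓗] [HopfAlgebra k 𝓗]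
    (δ : 𝓗 →ₐ[k] k)
    (hS2 : ∀ h : 𝓗, twistedAntipode δ (twistedAntipode δ h) = h) :
    ∃ (D : PreBialgebroid k (R ⊗[k] (𝓗 ⊗[k] Rᵐᵒᵖ)) R)
      (T : R ⊗[k] (𝓗 ⊗[k] Rᵐᵒᵖ) →ₗ[k] R ⊗[k] (𝓗 ⊗[k] Rᵐᵒᵖ)),
      D.IsParaHopf T ∧
      D.α = Algebra.TensorProduct.includeLeft ∧
      (∀ a : R, D.β a = (1 : R) ⊗ₜ[k] ((1 : 𝓗) ⊗ₜ[k] op a)) ∧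
      (∀ (a b : R) (h : 𝓗),
        D.π2 (D.Δ (a ⊗ₜ[k] (h ⊗ₜ[k] op b))) =
          D.π2 ((TensorProduct.lift
            (LinearMap.mk₂ k
              (fun x y => (a ⊗ₜ[k] (x ⊗ₜ[k] (op (1 : R)))) ⊗ₜ[k]
                ((1 : R) ⊗ₜ[k] (y ⊗ₜ[k] op b)))
              (by intros; simp [TensorProduct.add_tmul, TensorProduct.tmul_add])
              (by intros; simp [TensorProduct.smul_tmul, TensorProduct.tmul_smul])
              (by intros; simp [TensorProduct.add_tmul, TensorProduct.tmul_add])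
              (by intros; simp [TensorProduct.smul_tmul, TensorProduct.tmul_smul])))
            (comul (R := k) h))) ∧
      (∀ (a b : R) (h : 𝓗),
        D.ε (a ⊗ₜ[k] (h ⊗ₜ[k] op b)) = counit (R := k) h • (a * b)) ∧
      (∀ (a b : R) (h : 𝓗),
        T (a ⊗ₜ[k] (h ⊗ₜ[k] op b)) = b ⊗ₜ[k] (twistedAntipode δ h ⊗ₜ[k] op a)) := by
  refine ⟨EnvelopingTensor.preBialgebroid k R 𝓗, EnvelopingTensor.flip R (twistedAntipode δ),
    EnvelopingTensor.isParaHopf_flip_twistedAntipode δ hS2, rfl, fun _ => rfl, fun a b h => ?_,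
    fun a b => EnvelopingTensor.preBialgebroid_ε_tmul a (op b),
    fun a b => EnvelopingTensor.flip_tmul (twistedAntipode δ) a (op b)⟩
  refine congrArg (EnvelopingTensor.preBialgebroid k R 𝓗).π2
    ((EnvelopingTensor.preBialgebroid_Δ_tmul a (op b) h).trans ?_)
  exact LinearMap.congr_fun (TensorProduct.ext' fun _ _ => rfl) (comul (R := k) h)
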